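/- Let q be a prime power and n a positive integer, and let α, β ∈ Σ_{n,q} have the same type. Then a subset Y of GL(n,q) is transitive on α-flags if and only if Y is transitive on β-flags. -/

import Mathlib

open Module

/-- The linear automorphism of `F_q^n` induced by `g ∈ GL(n,q)`. -/
def glMap (F : Type) [Field F] {n : ℕ} (g : GL (Fin n) F) : (Fin n → F) →ₗ[F] (Fin n → F) :=
  Matrix.mulVecLin (g : Matrix (Fin n) (Fin n) F)

/-- An element `α = (ρ, I)` of `Σ_{n,q}`: a composition `ρ` of `n` together with a set `I` of
indices of parts of `ρ`, where for `q = 2` every part not indexed by `I` must exceed `1`. -/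
structure SigmaNQ (q n : ℕ) where
  ρ : Composition n
  I : Finset (Fin ρ.length)
  two : q = 2 → ∀ i ∉ I, 1 < ρ.blocksFun i

/-- The first component `σ` of the type of `α = (ρ,I)`: the multiset of parts `ρ_i` with
`i ∈ I` (a partition, recorded as an unordered multiset of parts). -/
def SigmaNQ.typeSigma {q n : ℕ} (α : SigmaNQ q n) : Multiset ℕ :=
  α.I.val.map α.ρ.blocksFun

/-- The second component `τ` of the type of `α = (ρ,I)`: the multiset of parts `ρ_i` with
`i ∉ I` (a partition, recorded as an unordered multiset of parts). -/
def SigmaNQ.typeTau {q n : ℕ} (α : SigmaNQ q n) : Multiset ℕ :=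
  α.Iᶜ.val.map α.ρ.blocksFun

/-- An `α`-flag for `α = (ρ,I) ∈ Σ_{n,q}`: a `ρ`-flag `{0} = V_0 ≤ V_1 ≤ ⋯ ≤ V_k = F_q^n`
with `dim(V_i/V_{i−1}) = ρ_i`, together with, for each `i ∈ I`, an ordered basis of the
quotient `V_i/V_{i−1}`, recorded by a tuple of `ρ_i` representatives in `V_i` whose classes
modulo `V_{i−1}` are linearly independent (hence a basis of `V_i/V_{i−1}`). -/
structure AlphaFlag (F : Type) [Field F] {q n : ℕ} (α : SigmaNQ q n) where
  V : Fin (α.ρ.length + 1) → Submodule F (Fin n → F)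
  mono : Monotone V
  bot_eq : V 0 = ⊥
  top_eq : V (Fin.last α.ρ.length) = ⊤
  dim : ∀ i : Fin α.ρ.length,
    finrank F (V i.succ) = finrank F (V i.castSucc) + α.ρ.blocksFun i
  B : ∀ i : Fin α.ρ.length, i ∈ α.I → Fin (α.ρ.blocksFun i) → (Fin n → F)
  B_mem : ∀ i hi m, B i hi m ∈ V i.succ
  B_indep : ∀ i hi,
    LinearIndependent F (fun m => (V i.castSucc).mkQ (B i hi m))

/-- `g ∈ GL(n,q)` maps the `α`-flag `A` to the `α`-flag `C`: it maps the subspaces of `A`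
to those of `C`, and the basis representatives of `A` to representatives of the same classes
as those of `C` (i.e. `g` maps the induced bases of the quotients to each other). -/
def MapsAlphaFlag (F : Type) [Field F] {q n : ℕ} {α : SigmaNQ q n} (g : GL (Fin n) F)
    (A C : AlphaFlag F α) : Prop :=
  (∀ j, Submodule.map (glMap F g) (A.V j) = C.V j) ∧
  (∀ i hi m, glMap F g (A.B i hi m) - C.B i hi m ∈ C.V i.castSucc)

/-- A subset `Y` of `GL(n,q)` is transitive on `α`-flags: there is a constant `r` such that
for all `α`-flags `A`, `C` there are exactly `r` elements `g ∈ Y` mapping `A` to `C`. -/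
def TransitiveOnAlphaFlags (F : Type) [Field F] [Fintype F] {q n : ℕ} (Y : Set (GL (Fin n) F))
    (α : SigmaNQ q n) : Prop :=
  ∃ r : ℕ, ∀ A C : AlphaFlag F α,
    Nat.card {g : GL (Fin n) F // g ∈ Y ∧ MapsAlphaFlag F g A C} = r

open Polynomial in
/-- The quotient `F[X] ⧸ (p)` carries an `F`-linear functional `l` for which the symmetric form
`(x, y) ↦ l (x * y)` is nondegenerate. -/
theorem exists_functional_quotient_span {F : Type} [Field F] (p : F[X]) (hp : p ≠ 0) :
    ∃ l : (F[X] ⧸ Ideal.span {p}) →ₗ[F] F, ∀ x, (∀ z, l (x * z) = 0) → x = 0 := by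
  set m := p * C p.leadingCoeff⁻¹
  have hmonic : m.Monic := monic_mul_leadingCoeff_inv hp
  have hspan : Ideal.span {p} = Ideal.span {m} :=
    Ideal.span_singleton_eq_span_singleton.2 (associated_mul_unit_right p _
      (isUnit_C.2 (inv_ne_zero (leadingCoeff_ne_zero.2 hp)).isUnit))
  rw [hspan]
  let l₀ : F[X] →ₗ[F] F := (lcoeff F (m.natDegree - 1)).comp (modByMonicHom m)
  have hl₀ : ∀ f, l₀ f = (f %ₘ m).coeff (m.natDegree - 1) := fun f => rfl
  let l : (F[X] ⧸ Ideal.span {m}) →ₗ[F] F :=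
    ((Ideal.span {m}).restrictScalars F).liftQ l₀ (by
      intro f hf
      have : m ∣ f := Ideal.mem_span_singleton.1 hf
      simp [hl₀, (modByMonic_eq_zero_iff_dvd hmonic).2 this])
  have hl : ∀ f : F[X], l (Ideal.Quotient.mk _ f) = (f %ₘ m).coeff (m.natDegree - 1) :=
    fun f => rfl
  refine ⟨l, fun x hx => ?_⟩
  obtain ⟨f, rfl⟩ := Ideal.Quotient.mk_surjective x
  by_contra hne
  have hf : ¬ m ∣ f := fun h => hne (Ideal.Quotient.eq_zero_iff_mem.2
    (Ideal.mem_span_singleton.2 h))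
  set r := f %ₘ m
  have hr0 : r ≠ 0 := fun h => hf ((modByMonic_eq_zero_iff_dvd hmonic).1 h)
  have hm1 : m ≠ 1 := fun h => hf (h ▸ one_dvd f)
  have hlt : r.natDegree < m.natDegree := natDegree_modByMonic_lt f hmonic hm1
  have hfr : Ideal.Quotient.mk (Ideal.span {m}) f = Ideal.Quotient.mk (Ideal.span {m}) r := by
    rw [Ideal.Quotient.eq, Ideal.mem_span_singleton]
    exact ⟨f /ₘ m, by rw [sub_eq_iff_eq_add, add_comm]; exact (modByMonic_add_div f m).symm⟩
  have h := hx (Ideal.Quotient.mk _ (X ^ (m.natDegree - 1 - r.natDegree)))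
  rw [hfr, ← map_mul, hl] at h
  have hdeg : (r * X ^ (m.natDegree - 1 - r.natDegree)).degree < m.degree := by
    rw [degree_mul, degree_X_pow, degree_eq_natDegree hr0, degree_eq_natDegree hmonic.ne_zero]
    norm_cast
    omega
  rw [(modByMonic_eq_self_iff hmonic).2 hdeg,
    show m.natDegree - 1 = r.natDegree + (m.natDegree - 1 - r.natDegree) by omega,
    Nat.add_sub_cancel_left, coeff_mul_X_pow] at h
  exact hr0 (leadingCoeff_eq_zero.1 h)

open Polynomial DirectSum in
/-- Every endomorphism of a finite-dimensional vector space is self-adjoint with respect to some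
nondegenerate symmetric bilinear form. -/
theorem exists_symm_nondegenerate_selfAdjoint {F : Type} [Field F] {V : Type} [AddCommGroup V]
    [Module F V] [FiniteDimensional F V] (f : V →ₗ[F] V) :
    ∃ B : LinearMap.BilinForm F V, (∀ x y, B x y = B y x) ∧ (∀ x, (∀ y, B x y = 0) → x = 0) ∧
      ∀ x y, B (f x) y = B x (f y) := by
  classical
  obtain ⟨ι, _, p, hp, k, ⟨e⟩⟩ := Module.equiv_directSum_of_isTorsion
    (R := F[X]) (M := AEval' f) (AEval.isTorsion_of_finiteDimensional F V f)
  choose l hl using fun i =>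
    exists_functional_quotient_span (p i ^ k i) (pow_ne_zero _ (hp i).ne_zero)
  let c : ∀ i, V → F[X] ⧸ Ideal.span {p i ^ k i} := fun i x => e (AEval'.of f x) i
  have cadd : ∀ i x y, c i (x + y) = c i x + c i y := by
    intro i x y
    simp only [c, map_add]
    rfl
  have csmul : ∀ i (a : F) x, c i (a • x) = a • c i x := by
    intro i a x
    have : AEval'.of f (a • x) = (C a : F[X]) • AEval'.of f x := by
      rw [map_smul]; exact (AEval.C_smul _ _ _).symm
    simp only [c, this, map_smul]
    rw [DirectSum.smul_apply]
    obtain ⟨z, hz⟩ := Ideal.Quotient.mk_surjective (e (AEval'.of f x) i)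
    change C a • e (AEval'.of f x) i = a • e (AEval'.of f x) i
    rw [← hz]
    change Ideal.Quotient.mk _ (C a * z) = Ideal.Quotient.mk _ (a • z)
    rw [smul_eq_C_mul]
  have cf : ∀ i x, c i (f x) = Ideal.Quotient.mk _ X * c i x := by
    intro i x
    simp only [c, ← AEval'.X_smul_of, map_smul]
    rfl
  refine ⟨LinearMap.mk₂ F (fun x y => ∑ i, l i (c i x * c i y)) ?_ ?_ ?_ ?_, ?_, ?_, ?_⟩
  · intro x y z
    simp only [cadd, add_mul, map_add, Finset.sum_add_distrib]
  · intro a x y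
    simp only [csmul, smul_mul_assoc, map_smul, Finset.smul_sum]
  · intro x y z
    simp only [cadd, mul_add, map_add, Finset.sum_add_distrib]
  · intro a x y
    simp only [csmul, mul_smul_comm, map_smul, Finset.smul_sum]
  · intro x y
    simp only [LinearMap.mk₂_apply, mul_comm]
  · intro x hx
    have : e (AEval'.of f x) = 0 := by
      ext i
      apply hl i (c i x)
      intro z
      have h := hx ((AEval'.of f).symm (e.symm (DirectSum.of _ i z)))
      rw [LinearMap.mk₂_apply, Finset.sum_eq_single i] at h
      · convert h using 3
        simp [c]
      · intro j _ hj
        have : c j ((AEval'.of f).symm (e.symm (DirectSum.of _ i z))) = 0 := by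
          simp only [c, LinearEquiv.apply_symm_apply]
          exact DirectSum.of_eq_of_ne _ _ _ hj
        rw [this, mul_zero, map_zero]
      · simp
    simpa using this
  · intro x y
    simp only [LinearMap.mk₂_apply, cf]
    refine Finset.sum_congr rfl fun i _ => ?_
    congr 1
    ring

section FlagStep

variable {F V : Type} [Field F] [AddCommGroup V] [Module F V]

/-- For `t = (a, b)`: the subspaces `W ≤ W'` are `f`-invariant, `W' / W` has dimension `a`, and
if `b` is true then `f` acts as the identity on `W' / W`. -/
def FlagStep (f : V →ₗ[F] V) (t : ℕ × Bool) (W W' : Submodule F V) : Prop :=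
  W ≤ W' ∧ W ≤ W.comap f ∧ W' ≤ W'.comap f ∧ finrank F W' = finrank F W + t.1 ∧
    (t.2 = true → ∀ x ∈ W', f x - x ∈ W)

/-- If `W ≤ W'` are `f`-invariant, then `W'` carries a symmetric bilinear form with radical `W` for
which `f` is self-adjoint. -/
theorem exists_symm_selfAdjoint_radical [FiniteDimensional F V] (f : V →ₗ[F] V)
    {W W' : Submodule F V} (hW : W ≤ W.comap f) (hW' : W' ≤ W'.comap f) :
    ∃ B : LinearMap.BilinForm F W', (∀ x y, B x y = B y x) ∧
      (∀ x, (∀ y, B x y = 0) ↔ (x : V) ∈ W) ∧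
      ∀ x y, B (f.restrict hW' x) y = B x (f.restrict hW' y) := by
  set N := W.submoduleOf W'
  have hN : N ≤ N.comap (f.restrict hW') := fun x hx => hW hx
  obtain ⟨B, hs, hn, hf⟩ := exists_symm_nondegenerate_selfAdjoint (N.mapQ N (f.restrict hW') hN)
  refine ⟨B.compl₁₂ N.mkQ N.mkQ, fun x y => hs _ _, fun x => ⟨fun h => ?_, fun h y => ?_⟩,
    fun x y => hf (N.mkQ x) (N.mkQ y)⟩
  · have : N.mkQ x = 0 := hn _ fun z => by
      obtain ⟨y, rfl⟩ := N.mkQ_surjective z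
      exact h y
    exact (Submodule.Quotient.mk_eq_zero N).1 this
  · have : N.mkQ x = 0 := (Submodule.Quotient.mk_eq_zero N).2 h
    simp [LinearMap.compl₁₂_apply, this]

/-- The duality on the interval `[W, W']` of the lattice of subspaces. -/
theorem exists_interval_duality [FiniteDimensional F V] (f : V →ₗ[F] V)
    {W W' : Submodule F V} (hle : W ≤ W') (hW : W ≤ W.comap f) (hW' : W' ≤ W'.comap f) :
    ∃ P : Submodule F V → Submodule F V, ∀ U, W ≤ U → U ≤ W' →
      W ≤ P U ∧ P U ≤ W' ∧ P (P U) = U ∧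
      finrank F (P U) + finrank F U = finrank F W + finrank F W' ∧
      (U ≤ U.comap f → P U ≤ (P U).comap f) ∧
      ((∀ x ∈ U, f x - x ∈ W) → ∀ x ∈ W', f x - x ∈ P U) ∧
      ((∀ x ∈ W', f x - x ∈ U) → ∀ x ∈ P U, f x - x ∈ W) := by
  obtain ⟨B, hs, hr, hf⟩ := exists_symm_selfAdjoint_radical f hW hW'
  have hrefl : B.IsRefl := fun x y h => by rw [hs]; exact h
  let P : Submodule F V → Submodule F V := fun U => (B.orthogonal (U.submoduleOf W')).map W'.subtype
  have hP : ∀ U x, x ∈ P U ↔ ∃ h : x ∈ W', ∀ y : W', (y : V) ∈ U → B y ⟨x, h⟩ = 0 := by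
    intro U x
    constructor
    · rintro ⟨x, hx, rfl⟩
      exact ⟨x.2, fun y hy => hx y hy⟩
    · rintro ⟨h, hx⟩
      exact ⟨⟨x, h⟩, fun y hy => hx y hy, rfl⟩
  have hPle : ∀ U, P U ≤ W' := fun U x hx => ((hP U x).1 hx).1
  have hWP : ∀ U, W ≤ P U := fun U x hx =>
    (hP U x).2 ⟨hle hx, fun y _ => by rw [hs]; exact (hr ⟨x, hle hx⟩).2 hx y⟩
  have htop : B.orthogonal ⊤ = W.submoduleOf W' := by
    ext x
    change _ ↔ (x : V) ∈ W
    rw [← hr x]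
    exact ⟨fun h y => by rw [hs]; exact h y trivial, fun h y _ => by
      change B y x = 0
      rw [hs]; exact h y⟩
  have hdim : ∀ U, W ≤ U → U ≤ W' →
      finrank F (P U) + finrank F U = finrank F W + finrank F W' := by
    intro U h1 h2
    have h := LinearMap.BilinForm.finrank_add_finrank_orthogonal hrefl (U.submoduleOf W')
    have h3 : U.submoduleOf W' ⊓ W.submoduleOf W' = W.submoduleOf W' :=
      inf_eq_right.2 (Submodule.comap_mono h1)
    rw [htop, h3, (Submodule.submoduleOfEquivOfLe h2).finrank_eq,
      (Submodule.submoduleOfEquivOfLe hle).finrank_eq] at h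
    have h4 : finrank F (P U) = finrank F (B.orthogonal (U.submoduleOf W')) :=
      Submodule.finrank_map_subtype_eq _ _
    omega
  refine ⟨P, fun U h1 h2 => ⟨hWP U, hPle U, ?_, hdim U h1 h2, ?_, ?_, ?_⟩⟩
  · symm
    apply Submodule.eq_of_le_of_finrank_eq
    · intro x hx
      refine (hP _ _).2 ⟨h2 hx, fun y hy => ?_⟩
      obtain ⟨_, hy'⟩ := (hP _ _).1 hy
      rw [hs]
      exact hy' ⟨x, h2 hx⟩ hx
    · have h3 := hdim U h1 h2
      have h4 := hdim (P U) (hWP U) (hPle U)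
      omega
  · intro hU x hx
    obtain ⟨hx', h⟩ := (hP _ _).1 hx
    refine (hP _ _).2 ⟨hW' hx', fun y hy => ?_⟩
    have := h (f.restrict hW' y) (hU hy)
    rw [hf] at this
    exact this
  · intro hU x hx
    refine (hP _ _).2 ⟨sub_mem (hW' hx) hx, fun y hy => ?_⟩
    have h3 : B (f.restrict hW' y - y) ⟨x, hx⟩ = 0 := (hr _).2 (hU y hy) _
    rw [map_sub, LinearMap.sub_apply, hf, ← map_sub] at h3
    exact h3
  · intro hU x hx
    obtain ⟨hx', h⟩ := (hP _ _).1 hx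
    refine (hr ⟨f x - x, sub_mem (hW' hx') hx'⟩).1 fun y => ?_
    have h3 : B (f.restrict hW' y - y) ⟨x, hx'⟩ = 0 := h _ (hU y y.2)
    rw [map_sub, LinearMap.sub_apply, hf, ← map_sub] at h3
    rw [hs]
    exact h3

theorem card_flagStep_flagStep_le [Finite V] [FiniteDimensional F V] (f : V →ₗ[F] V)
    (s t : ℕ × Bool) (W W' : Submodule F V) :
    Nat.card {U // FlagStep f s W U ∧ FlagStep f t U W'} ≤
      Nat.card {U // FlagStep f t W U ∧ FlagStep f s U W'} := by
  by_cases h : W ≤ W' ∧ W ≤ W.comap f ∧ W' ≤ W'.comap f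
  · obtain ⟨P, hP⟩ := exists_interval_duality f h.1 h.2.1 h.2.2
    refine Nat.card_le_card_of_injective (fun U => ⟨P U.1, ?_⟩) ?_
    · obtain ⟨U, ⟨a1, a2, a3, a4, a5⟩, b1, b2, b3, b4, b5⟩ := U
      obtain ⟨c1, c2, c3, c4, c5, c6, c7⟩ := hP U a1 b1
      refine ⟨⟨c1, a2, c5 a3, ?_, fun ht => c7 (b5 ht)⟩, c2, c5 a3, b3, ?_, fun hs => c6 (a5 hs)⟩
      · simp only; omega
      · simp only; omega
    · intro U U' hUU
      have h1 := (hP U.1 U.2.1.1 U.2.2.1).2.2.1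
      have h2 := (hP U'.1 U'.2.1.1 U'.2.2.1).2.2.1
      have h3 : P U.1 = P U'.1 := congrArg Subtype.val hUU
      exact Subtype.ext (by rw [← h1, h3, h2])
  · have : IsEmpty {U // FlagStep f s W U ∧ FlagStep f t U W'} :=
      ⟨fun U => h ⟨U.2.1.1.trans U.2.2.1, U.2.1.2.1, U.2.2.2.2.1⟩⟩
    simp

end FlagStep

section RelMatrix

variable {ι : Type} [Fintype ι]

open scoped Classical in
/-- The `0`-`1` matrix of a relation. -/
noncomputable def relMatrix (R : ι → ι → Prop) : Matrix ι ι ℕ :=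
  Matrix.of fun a b => if R a b then 1 else 0

open scoped Classical in
theorem relMatrix_mul_apply (R S : ι → ι → Prop) (a b : ι) :
    (relMatrix R * relMatrix S) a b = Nat.card {u // R a u ∧ S u b} := by
  rw [Nat.card_eq_fintype_card, Fintype.card_subtype, Finset.card_filter, Matrix.mul_apply]
  refine Finset.sum_congr rfl fun u _ => ?_
  simp only [relMatrix, Matrix.of_apply, ite_and, ite_mul, one_mul, zero_mul]

open scoped Classical in
/-- The entries of a product of relation matrices count chains. -/
theorem card_chain_eq_prod_relMatrix (k : ℕ) (R : Fin k → ι → ι → Prop) (a b : ι) :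
    Nat.card {c : Fin (k + 1) → ι //
      c 0 = a ∧ c (Fin.last k) = b ∧ ∀ i, R i (c i.castSucc) (c i.succ)} =
      (List.ofFn fun i => relMatrix (R i)).prod a b := by
  induction k generalizing a with
  | zero =>
    simp only [List.ofFn_zero, List.prod_nil, Matrix.one_apply]
    split_ifs with h
    · subst h
      rw [Nat.card_eq_one_iff_exists]
      refine ⟨⟨fun _ => a, rfl, rfl, fun i => i.elim0⟩, fun c => Subtype.ext (funext fun i => ?_)⟩
      rw [show i = 0 from Fin.ext (by omega)]
      exact c.2.1
    · rw [Nat.card_eq_zero]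
      exact Or.inl ⟨fun c => h (c.2.1.symm.trans c.2.2.1)⟩
  | succ k ih =>
    rw [List.ofFn_succ, List.prod_cons, Matrix.mul_apply]
    let e : {c : Fin (k + 1 + 1) → ι //
        c 0 = a ∧ c (Fin.last (k + 1)) = b ∧ ∀ i, R i (c i.castSucc) (c i.succ)} ≃
        Σ u : {u // R 0 a u}, {c : Fin (k + 1) → ι //
          c 0 = u ∧ c (Fin.last k) = b ∧ ∀ i : Fin k, R i.succ (c i.castSucc) (c i.succ)} :=
      { toFun := fun c => ⟨⟨c.1 1, by simpa [c.2.1] using c.2.2.2 0⟩,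
          ⟨Fin.tail c.1, rfl, c.2.2.1, fun i => c.2.2.2 i.succ⟩⟩
        invFun := fun c => ⟨Fin.cons a c.2.1, rfl, c.2.2.2.1, fun i => by
          refine Fin.cases ?_ (fun i => ?_) i
          · simpa [c.2.2.1] using c.1.2
          · simpa using c.2.2.2.2 i⟩
        left_inv := fun c => Subtype.ext (by
          obtain ⟨c, rfl, h⟩ := c
          exact Fin.cons_self_tail c)
        right_inv := by
          rintro ⟨⟨u, hu⟩, c, hc, h⟩
          obtain rfl : c 0 = u := hc
          rfl }
    rw [Nat.card_congr e, Nat.card_sigma]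
    simp only [ih]
    simp only [relMatrix, Matrix.of_apply, ite_mul, one_mul, zero_mul]
    rw [← Finset.sum_filter]
    exact (Finset.sum_subtype (p := R 0 a) _ (fun u => by simp) fun u =>
      (List.ofFn fun i => relMatrix (R (Fin.succ i))).prod u b).symm

end RelMatrix

section Counting

theorem card_eq_mul_of_card_fiber_eq {X Z : Type} [Finite X] [Finite Z] (p : X → Z) (k : ℕ)
    (h : ∀ z, Nat.card {x // p x = z} = k) : Nat.card X = Nat.card Z * k := by
  have := Fintype.ofFinite Z
  rw [← Nat.card_congr (Equiv.sigmaFiberEquiv p), Nat.card_sigma]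
  simp [h]

theorem forall_eq_iff_card_mul_sum_sq {X : Type} [Fintype X] (a : X → ℕ) :
    (∃ r, ∀ x, a x = r) ↔ Fintype.card X * ∑ x, a x ^ 2 = (∑ x, a x) ^ 2 := by
  have key : ∑ x, ∑ y, ((a x : ℤ) - a y) ^ 2 =
      2 * (Fintype.card X * ∑ x, (a x : ℤ) ^ 2 - (∑ x, (a x : ℤ)) ^ 2) := by
    simp only [sub_sq, Finset.sum_add_distrib, Finset.sum_sub_distrib, Finset.sum_const,
      Finset.card_univ, nsmul_eq_mul, ← Finset.mul_sum, ← Finset.sum_mul]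
    ring
  constructor
  · rintro ⟨r, hr⟩
    simp only [hr, Finset.sum_const, Finset.card_univ, smul_eq_mul]
    ring
  · intro h
    have h' : (Fintype.card X : ℤ) * ∑ x, (a x : ℤ) ^ 2 = (∑ x, (a x : ℤ)) ^ 2 := by
      exact_mod_cast h
    rw [h', sub_self, mul_zero, Finset.sum_eq_zero_iff_of_nonneg fun x _ =>
      Finset.sum_nonneg fun y _ => sq_nonneg _] at key
    rcases isEmpty_or_nonempty X with hX | ⟨⟨x₀⟩⟩
    · exact ⟨0, fun x => hX.elim x⟩
    · refine ⟨a x₀, fun x => ?_⟩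
      have h1 := (Finset.sum_eq_zero_iff_of_nonneg fun y _ => sq_nonneg _).1
        (key x (Finset.mem_univ _)) x₀ (Finset.mem_univ _)
      have h2 := pow_eq_zero_iff (two_ne_zero) |>.1 h1
      omega

open scoped Classical in
/-- For an action of `G` on the classes of an equivalence relation with classes of size `κ`, given
by the relation `R g x y` that `g` maps the class of `x` to the class of `y`, transitivity of a
subset of `G` depends only on the numbers of fixed points. -/
theorem transitive_iff_sum_card_fixed {G X : Type} [Group G] [Finite X]
    (R : G → X → X → Prop) (κ : ℕ) (hκ : ∀ g x, Nat.card {y // R g x y} = κ)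
    (hmul : ∀ {g h x y z}, R g x y → R h y z → R (h * g) x z)
    (hinv : ∀ {g x y}, R g x y → R g⁻¹ y x) (S : Finset G) :
    (∃ r, ∀ x y, Nat.card {g // g ∈ S ∧ R g x y} = r) ↔
      Nat.card X ^ 2 * (κ * ∑ g ∈ S, ∑ h ∈ S, Nat.card {x // R (h⁻¹ * g) x x}) =
        (S.card * Nat.card X * κ) ^ 2 := by
  have := Fintype.ofFinite X
  have hN : ∀ x y, Nat.card {g // g ∈ S ∧ R g x y} = ∑ g ∈ S, if R g x y then 1 else 0 := by
    intro x y
    rw [← Finset.card_filter]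
    exact Nat.subtype_card _ (by simp)
  have hκ' : ∀ g x, (∑ y, if R g x y then 1 else 0) = κ := by
    intro g x
    rw [← hκ g x, Nat.card_eq_fintype_card, Fintype.card_subtype, Finset.card_filter]
  have hR : ∀ g h x y, R g x y → (R h x y ↔ R (h⁻¹ * g) x x) := by
    intro g h x y hg
    refine ⟨fun hh => hmul hg (hinv hh), fun hh => ?_⟩
    have := hmul (hinv hh) hg
    simpa using this
  have hsum : ∑ z : X × X, Nat.card {g // g ∈ S ∧ R g z.1 z.2} = S.card * Nat.card X * κ := by
    rw [Fintype.sum_prod_type]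
    simp only [hN]
    rw [Finset.sum_congr rfl fun x _ => Finset.sum_comm]
    simp only [hκ', Finset.sum_const, smul_eq_mul, Finset.card_univ, Nat.card_eq_fintype_card]
    ring
  have hsq : ∑ z : X × X, Nat.card {g // g ∈ S ∧ R g z.1 z.2} ^ 2 =
      κ * ∑ g ∈ S, ∑ h ∈ S, Nat.card {x // R (h⁻¹ * g) x x} := by
    calc _ = ∑ x, ∑ y, ∑ g ∈ S, ∑ h ∈ S,
          (if R g x y then 1 else 0) * (if R (h⁻¹ * g) x x then 1 else 0) := by
          rw [Fintype.sum_prod_type]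
          refine Finset.sum_congr rfl fun x _ => Finset.sum_congr rfl fun y _ => ?_
          rw [hN, sq, Finset.sum_mul_sum]
          refine Finset.sum_congr rfl fun g _ => Finset.sum_congr rfl fun h _ => ?_
          by_cases hg : R g x y
          · simp only [hR g h x y hg]
          · simp [hg]
      _ = ∑ x, ∑ g ∈ S, ∑ h ∈ S, κ * (if R (h⁻¹ * g) x x then 1 else 0) := by
          refine Finset.sum_congr rfl fun x _ => ?_
          rw [Finset.sum_comm]
          refine Finset.sum_congr rfl fun g _ => ?_
          rw [Finset.sum_comm]
          refine Finset.sum_congr rfl fun h _ => ?_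
          rw [← Finset.sum_mul, hκ']
      _ = _ := by
          rw [Finset.sum_comm, Finset.mul_sum]
          refine Finset.sum_congr rfl fun g _ => ?_
          rw [Finset.sum_comm, Finset.mul_sum]
          refine Finset.sum_congr rfl fun h _ => ?_
          rw [← Finset.mul_sum, Nat.card_eq_fintype_card, Fintype.card_subtype, Finset.card_filter]
  have h := forall_eq_iff_card_mul_sum_sq fun z : X × X => Nat.card {g // g ∈ S ∧ R g z.1 z.2}
  rw [hsum, hsq, Fintype.card_prod, ← sq, ← Nat.card_eq_fintype_card] at h
  rw [← h]
  exact exists_congr fun r => ⟨fun h z => h z.1 z.2, fun h x y => h (x, y)⟩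

end Counting

section LinearCounting

variable {F : Type} [Field F] [Fintype F]

/-- The order of `GL(a, q)`. -/
def cardGL (q a : ℕ) : ℕ := ∏ i : Fin a, (q ^ a - q ^ i.val)

theorem card_linearIndependent_comp {M N : Type} [AddCommGroup M] [Module F M] [Finite M]
    [AddCommGroup N] [Module F N] (p : M →ₗ[F] N) (a : ℕ)
    (ha : finrank F M = finrank F (LinearMap.ker p) + a) :
    Nat.card {B : Fin a → M // LinearIndependent F fun m => p (B m)} =
      cardGL (Fintype.card F) a * (Fintype.card F ^ finrank F (LinearMap.ker p)) ^ a := by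
  have : Finite (LinearMap.range p) := Finite.of_surjective _ p.surjective_rangeRestrict
  have hfr : finrank F (LinearMap.range p) = a := by
    have := p.finrank_range_add_finrank_ker
    omega
  have hli : ∀ B : Fin a → M, (LinearIndependent F fun m => p (B m)) ↔
      LinearIndependent F fun m => p.rangeRestrict (B m) := by
    intro B
    rw [← LinearMap.linearIndependent_iff (LinearMap.range p).subtype (Submodule.ker_subtype _)]
    rfl
  have h := card_linearIndependent (K := F) (V := LinearMap.range p) (k := a) hfr.ge
  rw [hfr] at h
  rw [cardGL, ← h]
  refine card_eq_mul_of_card_fiber_eq (fun B => ⟨fun m => p.rangeRestrict (B.1 m), (hli _).1 B.2⟩)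
    _ fun c => ?_
  choose b hb using fun m => p.surjective_rangeRestrict (c.1 m)
  have hb' : ∀ m, p (b m) = c.1 m := fun m => congrArg Subtype.val (hb m)
  have hc : ∀ B : Fin a → M, (fun m => p.rangeRestrict (B m)) = c.1 ↔
      ∀ m, B m - b m ∈ LinearMap.ker p := by
    intro B
    rw [funext_iff]
    refine forall_congr' fun m => ?_
    rw [LinearMap.mem_ker, map_sub, hb', sub_eq_zero, Subtype.ext_iff]
    rfl
  let e : {B : {B : Fin a → M // LinearIndependent F fun m => p (B m)} //
      (⟨fun m => p.rangeRestrict (B.1 m), (hli _).1 B.2⟩ :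
        {s : Fin a → LinearMap.range p // LinearIndependent F s}) = c} ≃
      (Fin a → LinearMap.ker p) :=
    { toFun := fun B m => ⟨B.1.1 m - b m, (hc B.1.1).1 (congrArg Subtype.val B.2) m⟩
      invFun := fun v =>
        have hv : (fun m => p.rangeRestrict (b m + v m)) = c.1 :=
          (hc fun m => b m + v m).2 fun m => by simp
        ⟨⟨fun m => b m + v m, (hli _).2 (by rw [hv]; exact c.2)⟩, Subtype.ext hv⟩
      left_inv := fun B => Subtype.ext (Subtype.ext (funext fun m => by simp))
      right_inv := fun v => funext fun m => Subtype.ext (by simp) }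
  rw [Nat.card_congr e, Nat.card_fun, Module.natCard_eq_pow_finrank (K := F)]
  simp

theorem card_linearIndependent_mkQ {V : Type} [AddCommGroup V] [Module F V] [Finite V]
    {W W' : Submodule F V} (hle : W ≤ W') (a : ℕ) (ha : finrank F W' = finrank F W + a) :
    Nat.card {B : Fin a → W' // LinearIndependent F fun m => W.mkQ (B m)} =
      cardGL (Fintype.card F) a * (Fintype.card F ^ finrank F W) ^ a := by
  have hker : LinearMap.ker (W.mkQ.comp W'.subtype) = W.submoduleOf W' := by
    rw [LinearMap.ker_comp, Submodule.ker_mkQ]; rfl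
  have h := card_linearIndependent_comp (W.mkQ.comp W'.subtype) a (by
    rw [hker, (Submodule.submoduleOfEquivOfLe hle).finrank_eq, ha])
  rw [hker, (Submodule.submoduleOfEquivOfLe hle).finrank_eq] at h
  exact h

/-- A family in `W'` which is independent modulo `W` and of size `dim W' - dim W` spans `W'`
modulo `W`. -/
theorem le_sup_span_of_linearIndependent_mkQ {F V : Type} [Field F] [AddCommGroup V] [Module F V]
    [FiniteDimensional F V] {W W' : Submodule F V} (hle : W ≤ W') {a : ℕ}
    (ha : finrank F W' = finrank F W + a) (B : Fin a → V) (hB : ∀ m, B m ∈ W')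
    (hli : LinearIndependent F fun m => W.mkQ (B m)) :
    W' ≤ W ⊔ Submodule.span F (Set.range B) := by
  have hfr : finrank F (W'.map W.mkQ) = a := by
    have h := (W.mkQ.comp W'.subtype).finrank_range_add_finrank_ker
    rw [LinearMap.ker_comp, Submodule.ker_mkQ, LinearMap.range_comp, Submodule.range_subtype] at h
    have h2 : finrank F (W.comap W'.subtype) = finrank F W :=
      (Submodule.submoduleOfEquivOfLe hle).finrank_eq
    omega
  have hspan : Submodule.span F (Set.range fun m => W.mkQ (B m)) = W'.map W.mkQ := by
    apply Submodule.eq_of_le_of_finrank_eq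
    · rw [Submodule.span_le]
      rintro _ ⟨m, rfl⟩
      exact Submodule.mem_map_of_mem (hB m)
    · rw [finrank_span_eq_card hli, hfr, Fintype.card_fin]
  intro x hx
  have h1 : W.mkQ x ∈ (Submodule.span F (Set.range B)).map W.mkQ := by
    rw [Submodule.map_span, ← Set.range_comp]
    exact hspan ▸ Submodule.mem_map_of_mem hx
  rwa [← Submodule.mem_comap, Submodule.comap_map_mkQ] at h1

end LinearCounting

section Flags

variable {F : Type} [Field F] {q n : ℕ} {α : SigmaNQ q n}

theorem glMap_mul_apply (g h : GL (Fin n) F) (x : Fin n → F) :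
    glMap F (g * h) x = glMap F g (glMap F h x) := by
  simp [glMap, Matrix.mulVec_mulVec]

theorem glMap_one_apply (x : Fin n → F) : glMap F (1 : GL (Fin n) F) x = x := by
  simp [glMap]

/-- `glMap` as a linear equivalence. -/
def glEquiv (g : GL (Fin n) F) : (Fin n → F) ≃ₗ[F] (Fin n → F) :=
  LinearEquiv.ofLinearMap (glMap F g) (glMap F g⁻¹)
    (LinearMap.ext fun x => by simp [← glMap_mul_apply, glMap_one_apply])
    (LinearMap.ext fun x => by simp [← glMap_mul_apply, glMap_one_apply])

theorem map_glMap_mul (g h : GL (Fin n) F) (W : Submodule F (Fin n → F)) :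
    W.map (glMap F (g * h)) = (W.map (glMap F h)).map (glMap F g) := by
  rw [← Submodule.map_comp]
  congr 1
  exact LinearMap.ext (glMap_mul_apply g h)

theorem map_glMap_one (W : Submodule F (Fin n → F)) : W.map (glMap F (1 : GL (Fin n) F)) = W := by
  rw [show glMap F (1 : GL (Fin n) F) = LinearMap.id from LinearMap.ext glMap_one_apply,
    Submodule.map_id]

theorem map_glMap_eq_iff (g : GL (Fin n) F) (W : Submodule F (Fin n → F)) :
    W.map (glMap F g) = W ↔ W ≤ W.comap (glMap F g) := by
  rw [← Submodule.map_le_iff_le_comap]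
  refine ⟨fun h => h.le, fun h => Submodule.eq_of_le_of_finrank_eq h ?_⟩
  exact (glEquiv g).finrank_map_eq W

theorem MapsAlphaFlag.trans {g h : GL (Fin n) F} {A C D : AlphaFlag F α}
    (h₁ : MapsAlphaFlag F g A C) (h₂ : MapsAlphaFlag F h C D) : MapsAlphaFlag F (h * g) A D := by
  refine ⟨fun j => by rw [map_glMap_mul, h₁.1, h₂.1], fun i hi m => ?_⟩
  have h3 : glMap F h (glMap F g (A.B i hi m) - C.B i hi m) ∈ D.V i.castSucc := by
    rw [← h₂.1]
    exact Submodule.mem_map_of_mem (h₁.2 i hi m)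
  rw [glMap_mul_apply]
  simpa using add_mem h3 (h₂.2 i hi m)

theorem MapsAlphaFlag.symm {g : GL (Fin n) F} {A C : AlphaFlag F α}
    (h : MapsAlphaFlag F g A C) : MapsAlphaFlag F g⁻¹ C A := by
  have hV : ∀ j, (C.V j).map (glMap F g⁻¹) = A.V j := fun j => by
    rw [← h.1, ← map_glMap_mul, inv_mul_cancel, map_glMap_one]
  refine ⟨hV, fun i hi m => ?_⟩
  have h3 : glMap F g⁻¹ (glMap F g (A.B i hi m) - C.B i hi m) ∈ A.V i.castSucc := by
    rw [← hV]
    exact Submodule.mem_map_of_mem (h.2 i hi m)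
  rw [map_sub, ← glMap_mul_apply, inv_mul_cancel, glMap_one_apply] at h3
  rw [← neg_sub]
  exact neg_mem h3

theorem MapsAlphaFlag.refl (A : AlphaFlag F α) : MapsAlphaFlag F 1 A A :=
  ⟨fun _ => map_glMap_one _, fun i hi m => by simp [glMap_one_apply]⟩

theorem AlphaFlag.ext_of_eq {A C : AlphaFlag F α} (hV : A.V = C.V) (hB : A.B = C.B) : A = C := by
  cases A
  cases C
  cases hV
  cases hB
  rfl

instance [Finite F] : Finite (AlphaFlag F α) :=
  Finite.of_injective (fun A => (A.V, A.B)) fun _ _ h =>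
    AlphaFlag.ext_of_eq (congrArg Prod.fst h) (congrArg Prod.snd h)

theorem finrank_eq_sizeUpTo {V : Fin (α.ρ.length + 1) → Submodule F (Fin n → F)} (h0 : V 0 = ⊥)
    (hs : ∀ i : Fin α.ρ.length, finrank F (V i.succ) = finrank F (V i.castSucc) + α.ρ.blocksFun i)
    (j : Fin (α.ρ.length + 1)) : finrank F (V j) = α.ρ.sizeUpTo j := by
  induction j using Fin.induction with
  | zero => simp [h0]
  | succ i ih =>
    rw [hs, ih, Fin.val_succ, Fin.val_castSucc, Composition.sizeUpTo_succ']

/-- The image of an `α`-flag under `g`. -/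
def AlphaFlag.map (g : GL (Fin n) F) (A : AlphaFlag F α) : AlphaFlag F α where
  V j := (A.V j).map (glMap F g)
  mono _ _ h := Submodule.map_mono (A.mono h)
  bot_eq := by rw [A.bot_eq, Submodule.map_bot]
  top_eq := by
    rw [A.top_eq, Submodule.map_top, LinearMap.range_eq_top]
    exact (glEquiv g).surjective
  dim i := by
    have h : ∀ j, finrank F ((A.V j).map (glMap F g)) = finrank F (A.V j) :=
      fun j => (glEquiv g).finrank_map_eq (A.V j)
    rw [h, h, A.dim]
  B i hi m := glMap F g (A.B i hi m)
  B_mem i hi m := Submodule.mem_map_of_mem (A.B_mem i hi m)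
  B_indep i hi := by
    exact (A.B_indep i hi).map' (Submodule.Quotient.equiv (A.V i.castSucc)
      ((A.V i.castSucc).map (glMap F g)) (glEquiv g) rfl).toLinearMap (LinearEquiv.ker _)

/-- Changing the representatives of the bases of an `α`-flag. -/
def AlphaFlag.addToBases (A : AlphaFlag F α)
    (v : ∀ i : α.I, Fin (α.ρ.blocksFun i) → A.V i.1.castSucc) : AlphaFlag F α where
  __ := A
  B i hi m := A.B i hi m + v ⟨i, hi⟩ m
  B_mem i hi m := add_mem (A.B_mem i hi m) (A.mono (Fin.castSucc_le_succ i) (v ⟨i, hi⟩ m).2)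
  B_indep i hi := by
    have h : ∀ m, (A.V i.castSucc).mkQ (A.B i hi m + v ⟨i, hi⟩ m) =
        (A.V i.castSucc).mkQ (A.B i hi m) := fun m => by
      rw [map_add, add_eq_left]
      exact (Submodule.Quotient.mk_eq_zero _).2 (v ⟨i, hi⟩ m).2
    simp only [h]
    exact A.B_indep i hi

/-- The number of choices of representatives of the bases in an `α`-flag. -/
def representativeCount (F : Type) [Fintype F] (α : SigmaNQ q n) : ℕ :=
  ∏ i : α.I, (Fintype.card F ^ α.ρ.sizeUpTo i) ^ α.ρ.blocksFun i

theorem card_mapsAlphaFlag [Fintype F] (g : GL (Fin n) F) (A : AlphaFlag F α) :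
    Nat.card {C // MapsAlphaFlag F g A C} = representativeCount F α := by
  have hmem : ∀ C : AlphaFlag F α, MapsAlphaFlag F g A C → ∀ i hi m,
      C.B i hi m - glMap F g (A.B i hi m) ∈ (A.map g).V i.castSucc := by
    intro C hC i hi m
    have h := neg_mem (hC.2 i hi m)
    rw [neg_sub, ← hC.1] at h
    exact h
  let e : {C // MapsAlphaFlag F g A C} ≃
      ∀ i : α.I, Fin (α.ρ.blocksFun i) → (A.map g).V i.1.castSucc :=
    { toFun := fun C i m => ⟨C.1.B i i.2 m - glMap F g (A.B i i.2 m), hmem C.1 C.2 i i.2 m⟩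
      invFun := fun v => ⟨(A.map g).addToBases v, fun j => rfl, fun i hi m => by
        have h : glMap F g (A.B i hi m) - (glMap F g (A.B i hi m) + v ⟨i, hi⟩ m) ∈
            (A.map g).V i.castSucc := by simp
        exact h⟩
      left_inv := fun C => Subtype.ext (AlphaFlag.ext_of_eq (funext fun j => C.2.1 j)
        (funext fun i => funext fun hi => funext fun m => add_sub_cancel _ _))
      right_inv := fun v => funext fun i => funext fun m => Subtype.ext (add_sub_cancel_left _ _) }
  rw [Nat.card_congr e, Nat.card_pi, representativeCount]
  refine Finset.prod_congr rfl fun i _ => ?_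
  rw [Nat.card_fun, Module.natCard_eq_pow_finrank (K := F),
    finrank_eq_sizeUpTo (A.map g).bot_eq (A.map g).dim]
  simp

/-- The sizes of the parts of `α`, together with their membership in `I`. -/
def SigmaNQ.steps (α : SigmaNQ q n) (i : Fin α.ρ.length) : ℕ × Bool :=
  (α.ρ.blocksFun i, decide (i ∈ α.I))

/-- The chains of `g`-invariant subspaces underlying the `α`-flags fixed by `g`. -/
abbrev FixedChain (g : GL (Fin n) F) (α : SigmaNQ q n) : Type :=
  {c : Fin (α.ρ.length + 1) → Submodule F (Fin n → F) // c 0 = ⊥ ∧ c (Fin.last _) = ⊤ ∧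
    ∀ i, FlagStep (glMap F g) (α.steps i) (c i.castSucc) (c i.succ)}

theorem MapsAlphaFlag.flagStep {g : GL (Fin n) F} {A : AlphaFlag F α}
    (h : MapsAlphaFlag F g A A) (i : Fin α.ρ.length) :
    FlagStep (glMap F g) (α.steps i) (A.V i.castSucc) (A.V i.succ) := by
  have hinv := fun j => (map_glMap_eq_iff g (A.V j)).1 (h.1 j)
  have hle := A.mono (Fin.castSucc_le_succ i)
  refine ⟨hle, hinv _, hinv _, A.dim i, fun ht x hx => ?_⟩
  have hi : i ∈ α.I := of_decide_eq_true ht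
  have hspan := le_sup_span_of_linearIndependent_mkQ hle (A.dim i) (A.B i hi) (A.B_mem i hi)
    (A.B_indep i hi)
  have hsup : A.V i.castSucc ⊔ Submodule.span F (Set.range (A.B i hi)) ≤
      (A.V i.castSucc).comap (glMap F g - LinearMap.id) := by
    refine sup_le (fun y hy => ?_) (Submodule.span_le.2 ?_)
    · exact (sub_mem (hinv _ hy) hy : glMap F g y - y ∈ A.V i.castSucc)
    rintro _ ⟨m, rfl⟩
    exact h.2 i hi m
  exact hsup (hspan hx)

/-- An `α`-flag fixed by `g` consists of a chain of subspaces and bases of its marked quotients. -/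
def fixedFlagEquiv (g : GL (Fin n) F) (α : SigmaNQ q n) :
    {A : AlphaFlag F α // MapsAlphaFlag F g A A} ≃
      Σ c : FixedChain g α, ∀ i : α.I, {B : Fin (α.ρ.blocksFun i) → c.1 i.1.succ //
        LinearIndependent F fun m => (c.1 i.1.castSucc).mkQ (B m)} where
  toFun A := ⟨⟨A.1.V, A.1.bot_eq, A.1.top_eq, A.2.flagStep⟩, fun i =>
    ⟨fun m => ⟨A.1.B i i.2 m, A.1.B_mem i i.2 m⟩, A.1.B_indep i i.2⟩⟩
  invFun c :=
    ⟨{  V := c.1.1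
        mono := Fin.monotone_iff_le_succ.2 fun i => (c.1.2.2.2 i).1
        bot_eq := c.1.2.1
        top_eq := c.1.2.2.1
        dim := fun i => (c.1.2.2.2 i).2.2.2.1
        B := fun i hi m => (c.2 ⟨i, hi⟩).1 m
        B_mem := fun i hi m => ((c.2 ⟨i, hi⟩).1 m).2
        B_indep := fun i hi => (c.2 ⟨i, hi⟩).2 },
      fun j => (map_glMap_eq_iff g _).2 (by
        refine Fin.cases ?_ (fun i => (c.1.2.2.2 i).2.2.1) j
        simp [c.1.2.1]),
      fun i hi m => (c.1.2.2.2 i).2.2.2.2 (decide_eq_true hi) _ ((c.2 ⟨i, hi⟩).1 m).2⟩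
  left_inv _ := rfl
  right_inv _ := rfl

theorem card_fixed_alphaFlag [Fintype F] (g : GL (Fin n) F) (α : SigmaNQ q n) :
    Nat.card {A : AlphaFlag F α // MapsAlphaFlag F g A A} =
      Nat.card (FixedChain g α) *
        ((α.typeSigma.map (cardGL (Fintype.card F))).prod * representativeCount F α) := by
  have := Fintype.ofFinite (FixedChain g α)
  rw [Nat.card_congr (fixedFlagEquiv g α), Nat.card_sigma]
  have h : ∀ c : FixedChain g α, Nat.card (∀ i : α.I, {B : Fin (α.ρ.blocksFun i) → c.1 i.1.succ //
        LinearIndependent F fun m => (c.1 i.1.castSucc).mkQ (B m)}) =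
      (α.typeSigma.map (cardGL (Fintype.card F))).prod * representativeCount F α := by
    intro c
    rw [Nat.card_pi, representativeCount, SigmaNQ.typeSigma, Multiset.map_map]
    change _ = (∏ i ∈ α.I, cardGL (Fintype.card F) (α.ρ.blocksFun i)) * _
    rw [← Finset.prod_coe_sort α.I, ← Finset.prod_mul_distrib]
    refine Finset.prod_congr rfl fun i _ => ?_
    refine (card_linearIndependent_mkQ (c.2.2.2 i).1 _ (c.2.2.2 i).2.2.2.1).trans ?_
    rw [finrank_eq_sizeUpTo c.2.1 fun i => (c.2.2.2 i).2.2.2.1]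
    rfl
  simp only [h, Finset.sum_const, Finset.card_univ, smul_eq_mul, Nat.card_eq_fintype_card]

theorem ofFn_steps (α : SigmaNQ q n) :
    (List.ofFn α.steps : Multiset (ℕ × Bool)) =
      α.typeSigma.map (·, true) + α.typeTau.map (·, false) := by
  have h1 : (List.ofFn α.steps : Multiset (ℕ × Bool)) =
      (Finset.univ : Finset (Fin α.ρ.length)).val.map α.steps := by
    rw [Fin.univ_val_map]
  have h2 : (Finset.univ : Finset (Fin α.ρ.length)).val = α.I.val + α.Iᶜ.val := by
    rw [← Finset.disjUnion_val α.I α.Iᶜ disjoint_compl_right, Finset.disjUnion_eq_union,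
      Finset.union_compl]
  rw [h1, h2, Multiset.map_add, SigmaNQ.typeSigma, SigmaNQ.typeTau, Multiset.map_map,
    Multiset.map_map]
  congr 1
  · exact Multiset.map_congr rfl fun i hi => by
      simpa [SigmaNQ.steps] using hi
  · exact Multiset.map_congr rfl fun i hi => by
      simpa [SigmaNQ.steps] using hi

theorem card_fixedChain_eq [Finite F] (g : GL (Fin n) F) {α β : SigmaNQ q n}
    (hσ : α.typeSigma = β.typeSigma) (hτ : α.typeTau = β.typeTau) :
    Nat.card (FixedChain g α) = Nat.card (FixedChain g β) := by
  classical
  have := Fintype.ofFinite (Submodule F (Fin n → F))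
  have hperm : (List.ofFn α.steps).Perm (List.ofFn β.steps) := by
    rw [← Multiset.coe_eq_coe, ofFn_steps, ofFn_steps, hσ, hτ]
  have hcomm : ∀ s t, Commute (relMatrix (FlagStep (glMap F g) s))
      (relMatrix (FlagStep (glMap F g) t)) := by
    intro s t
    ext W W'
    rw [relMatrix_mul_apply, relMatrix_mul_apply]
    exact le_antisymm (card_flagStep_flagStep_le _ _ _ _ _) (card_flagStep_flagStep_le _ _ _ _ _)
  have hofFn : ∀ γ : SigmaNQ q n,
      (List.ofFn fun i => relMatrix (FlagStep (glMap F g) (γ.steps i))) =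
        (List.ofFn γ.steps).map fun t => relMatrix (FlagStep (glMap F g) t) := fun γ => by
    rw [List.map_ofFn]
    rfl
  have hprod := (hperm.map fun t => relMatrix (FlagStep (glMap F g) t)).prod_eq'
    (List.pairwise_map.2 (List.pairwise_of_forall hcomm))
  rw [card_chain_eq_prod_relMatrix, card_chain_eq_prod_relMatrix, hofFn, hofFn]
  exact congrFun₂ hprod ⊥ ⊤

theorem transitiveOnAlphaFlags_iff [Fintype F] (Y : Set (GL (Fin n) F)) (α : SigmaNQ q n) :
    TransitiveOnAlphaFlags F Y α ↔
      Nat.card (FixedChain (1 : GL (Fin n) F) α) ^ 2 *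
        (α.typeSigma.map (cardGL (Fintype.card F))).prod ^ 2 *
        ((α.typeSigma.map (cardGL (Fintype.card F))).prod *
          ∑ g ∈ Y.toFinite.toFinset, ∑ h ∈ Y.toFinite.toFinset,
            Nat.card (FixedChain (h⁻¹ * g) α)) =
      Nat.card (FixedChain (1 : GL (Fin n) F) α) ^ 2 *
        (α.typeSigma.map (cardGL (Fintype.card F))).prod ^ 2 *
        Y.toFinite.toFinset.card ^ 2 := by
  have hX : Nat.card (AlphaFlag F α) = Nat.card {A : AlphaFlag F α // MapsAlphaFlag F 1 A A} :=
    Nat.card_congr (Equiv.subtypeUnivEquiv fun A => MapsAlphaFlag.refl A).symm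
  have h := transitive_iff_sum_card_fixed (fun g (A C : AlphaFlag F α) => MapsAlphaFlag F g A C)
    (representativeCount F α) card_mapsAlphaFlag (fun h₁ h₂ => h₁.trans h₂) (fun h => h.symm)
    Y.toFinite.toFinset
  simp only [hX, card_fixed_alphaFlag, Set.Finite.mem_toFinset, ← Finset.sum_mul] at h
  have hpos : 0 < representativeCount F α ^ 4 := pow_pos (Finset.prod_pos fun i _ =>
    pow_pos (pow_pos Fintype.card_pos _) _) _
  rw [TransitiveOnAlphaFlags, h]
  refine Iff.trans ?_ (Nat.mul_left_inj hpos.ne')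
  ring_nf

end Flags

/-- If `α, β ∈ Σ_{n,q}` have the same type, then `Y ⊆ GL(n,q)` is transitive on `α`-flags
iff it is transitive on `β`-flags. -/
theorem statement1 (q : ℕ) (hq : IsPrimePow q) (F : Type) [Field F] [Fintype F]
    (hF : Fintype.card F = q) (n : ℕ) (hn : 0 < n) (α β : SigmaNQ q n)
    (hσ : α.typeSigma = β.typeSigma) (hτ : α.typeTau = β.typeTau)
    (Y : Set (GL (Fin n) F)) :
    TransitiveOnAlphaFlags F Y α ↔ TransitiveOnAlphaFlags F Y β := by
  simp only [transitiveOnAlphaFlags_iff, card_fixedChain_eq _ hσ hτ, hσ]
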